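/- Every non-Hamiltonian bridgeless graph of order n ≥ 5 with at least n + 3 edges has an orientation of diameter at most n - 2. -/

import Mathlib

open SimpleGraph

/-- `R` is an orientation of the simple graph `G`: every arc of `R` lies on an edge of `G`,
and every edge of `G` receives exactly one of its two possible directions. -/
def IsOrientation {V : Type*} (G : SimpleGraph V) (R : V → V → Prop) : Prop :=
  (∀ u v, R u v → G.Adj u v) ∧ ∀ u v, G.Adj u v → (R u v ↔ ¬ R v u)

/-- `RelPow R k u v` : there is a directed walk of length `k` from `u` to `v`. -/
def RelPow {V : Type*} (R : V → V → Prop) : ℕ → V → V → Prop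
  | 0, u, v => u = v
  | n + 1, u, v => ∃ w, R u w ∧ RelPow R n w v

/-- The digraph `R` has diameter at most `d`: any vertex can reach any other by a
directed walk of length at most `d`. -/
def DiamLE {V : Type*} (R : V → V → Prop) (d : ℕ) : Prop :=
  ∀ u v, ∃ k ≤ d, RelPow R k u v

/-- A digraph is strongly connected if every vertex can reach every other. -/
def StronglyConnected {V : Type*} (R : V → V → Prop) : Prop :=
  ∀ u v, Relation.ReflTransGen R u v

/-- A graph is bridgeless if it is connected and contains no bridge. -/
def Bridgeless {V : Type*} (G : SimpleGraph V) : Prop :=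
  G.Connected ∧ ∀ e, ¬ G.IsBridge e

/-- The graph `G_{n,d}`: the path `u_1 … u_d` is the set of indices `0,…,d-1`,
the clique `K_{n-d-1}` is the set of indices `d,…,n-2`, both endpoints `0` and `d-1`
of the path are joined to all clique vertices, and the extra vertex `u_3'` is the
index `n-1`, joined to `u_2, u_3, u_4`, i.e. to indices `1, 2, 3`. -/
def Gnd (n d : ℕ) : SimpleGraph (Fin n) :=
  SimpleGraph.fromRel (fun i j =>
    ((i : ℕ) + 1 = (j : ℕ) ∧ (j : ℕ) < d) ∨
    (d ≤ (i : ℕ) ∧ (i : ℕ) < n - 1 ∧ d ≤ (j : ℕ) ∧ (j : ℕ) < n - 1) ∨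
    (((i : ℕ) = 0 ∨ (i : ℕ) = d - 1) ∧ d ≤ (j : ℕ) ∧ (j : ℕ) < n - 1) ∨
    ((i : ℕ) = n - 1 ∧ ((j : ℕ) = 1 ∨ (j : ℕ) = 2 ∨ (j : ℕ) = 3)))

/-- The graph `H_{n,n-2}`: the cycle `u_1 … u_{n-1} u_1` is the set of indices
`0,…,n-2` in cyclic order, and the extra vertex `u_3'` is the index `n-1`,
joined to `u_2, u_3, u_4`, i.e. to indices `1, 2, 3`. -/
def Hgraph (n : ℕ) : SimpleGraph (Fin n) :=
  SimpleGraph.fromRel (fun i j =>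
    ((i : ℕ) + 1 = (j : ℕ) ∧ (j : ℕ) ≤ n - 2) ∨
    ((i : ℕ) = 0 ∧ (j : ℕ) = n - 2) ∨
    ((i : ℕ) = n - 1 ∧ ((j : ℕ) = 1 ∨ (j : ℕ) = 2 ∨ (j : ℕ) = 3)))


/-- Ranking of the vertices `0,…,n-1` by distance from a source, all levels singletons. -/
structure RankN (n : ℕ) (R : ℕ → ℕ → Prop) (f : ℕ → ℕ) : Prop where
  inj : ∀ x y, x < n → y < n → f x = f y → x = y
  src : ∃ s < n, f s = 0
  step : ∀ x y, R x y → f y ≤ f x + 1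
  pred : ∀ y < n, f y = 0 ∨ ∃ x < n, R x y ∧ f y = f x + 1

/-- every strong partial orientation of `A` is ranked -/
def HypN (n : ℕ) (A : ℕ → ℕ → Prop) : Prop :=
  ∀ R : ℕ → ℕ → Prop, (∀ x y, R x y → A x y) → (∀ x y, R x y → ¬ R y x) →
    (∀ x y, x < n → y < n → Relation.ReflTransGen R x y) → ∃ f, RankN n R f

/-- graph on `0,…,n-1` containing the path -/
structure PathG (n : ℕ) (A : ℕ → ℕ → Prop) : Prop where
  lt : ∀ x y, A x y → x < n ∧ y < n
  symm : ∀ x y, A x y → A y x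
  path : ∀ x, x + 1 < n → A x (x+1)

lemma ascend_path {R : ℕ → ℕ → Prop} {l h : ℕ} (hR : ∀ i, l ≤ i → i < h → R i (i+1)) :
    ∀ x y, l ≤ x → x ≤ y → y ≤ h → Relation.ReflTransGen R x y := by
  intro x y hx hxy
  induction y, hxy using Nat.le_induction with
  | base => intro _; exact .refl
  | succ y hy ih => intro h1; exact (ih (by omega)).tail (hR y (by omega) (by omega))

lemma descend_path {R : ℕ → ℕ → Prop} {l h : ℕ} (hR : ∀ i, l ≤ i → i < h → R (i+1) i) :
    ∀ x y, l ≤ x → x ≤ y → y ≤ h → Relation.ReflTransGen R y x := by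
  intro x y hx hxy
  induction y, hxy using Nat.le_induction with
  | base => intro _; exact .refl
  | succ y hy ih => intro h1; exact Relation.ReflTransGen.head (hR y (by omega) (by omega)) (ih (by omega))

namespace RankN
variable {n : ℕ} {R : ℕ → ℕ → Prop} {f : ℕ → ℕ}

lemma entry (hf : RankN n R f) (P : ℕ → Prop) (a z : ℕ) (hz : z < n) (hP : P z)
    (ent : ∀ x y, R x y → P y → ¬ P x → x = a) :
    (∃ s < n, P s ∧ f s = 0) ∨
      ((∃ y < n, P y ∧ f y = f a + 1) ∧ ∀ y < n, P y → f a + 1 ≤ f y) := by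
  classical
  have hex : ∃ m, ∃ y < n, P y ∧ f y = m := ⟨f z, z, hz, hP, rfl⟩
  obtain ⟨y, hy, hPy, hm⟩ := Nat.find_spec hex
  have hmin : ∀ w < n, P w → f y ≤ f w := fun w hw hPw => by
    rw [hm]; exact Nat.find_min' hex ⟨w, hw, hPw, rfl⟩
  rcases hf.pred y hy with h0 | ⟨x, hx, hR, he⟩
  · exact Or.inl ⟨y, hy, hPy, h0⟩
  · have : ¬ P x := fun h => by have := hmin x hx h; omega
    have hxa := ent x y hR hPy this
    subst hxa
    exact Or.inr ⟨⟨y, hy, hPy, he⟩, fun w hw hPw => he ▸ hmin w hw hPw⟩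

/-- a set entered only from `a`, where `a` has two out-neighbours in the set, holds the source -/
lemma branch (hf : RankN n R f) (P : ℕ → Prop) (a y z : ℕ) (hy : y < n) (hz : z < n)
    (hPy : P y) (hPz : P z) (hyz : y ≠ z) (hay : R a y) (haz : R a z)
    (ent : ∀ x y, R x y → P y → ¬ P x → x = a) : ∃ s < n, P s ∧ f s = 0 := by
  rcases hf.entry P a z hz hPz ent with h | ⟨_, h⟩
  · exact h
  · have h1 := h y hy hPy
    have h2 := h z hz hPz
    have h3 := hf.step _ _ hay
    have h4 := hf.step _ _ haz
    exact absurd (hf.inj y z hy hz (by omega)) hyz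

/-- two disjoint sets entered only from `a`: one of them holds the source -/
lemma twoset (hf : RankN n R f) (P Q : ℕ → Prop) (a y z : ℕ) (hy : y < n) (hz : z < n)
    (hPy : P y) (hQz : Q z) (dis : ∀ x, P x → ¬ Q x)
    (entP : ∀ x y, R x y → P y → ¬ P x → x = a)
    (entQ : ∀ x y, R x y → Q y → ¬ Q x → x = a) : ∃ s < n, (P s ∨ Q s) ∧ f s = 0 := by
  rcases hf.entry P a y hy hPy entP with ⟨s, hs, h, h0⟩ | ⟨⟨p, hp, hPp, hfp⟩, _⟩
  · exact ⟨s, hs, Or.inl h, h0⟩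
  rcases hf.entry Q a z hz hQz entQ with ⟨s, hs, h, h0⟩ | ⟨⟨q, hq, hQq, hfq⟩, _⟩
  · exact ⟨s, hs, Or.inr h, h0⟩
  have := hf.inj p q hp hq (by omega)
  subst this
  exact absurd hQq (dis _ hPp)

lemma uniq (hf : RankN n R f) {s t : ℕ} (hs : s < n) (ht : t < n) (h0 : f s = 0) (h1 : f t = 0) :
    s = t := hf.inj s t hs ht (by omega)

/-- all values below `k` are taken in `D` -/
def Done (n : ℕ) (f : ℕ → ℕ) (D : ℕ → Prop) (k : ℕ) : Prop := ∀ m < k, ∃ z < n, D z ∧ f z = m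

lemma Done.ge (hf : RankN n R f) {D : ℕ → Prop} {k : ℕ} (hD : Done n f D k) {y : ℕ} (hy : y < n)
    (hDy : ¬ D y) : k ≤ f y := by
  by_contra h
  obtain ⟨z, hz, hDz, he⟩ := hD (f y) (by omega)
  exact hDy (hf.inj z y hz hy he ▸ hDz)

lemma chain (hf : RankN n R f) {D : ℕ → Prop} {k : ℕ} (hD : Done n f D k) (x h : ℕ) (hxh : x ≤ h)
    (hn : h < n) (hDx : ∀ i, x ≤ i → i ≤ h → ¬ D i) (hR : ∀ i, x ≤ i → i < h → R i (i+1))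
    (hfx : f x ≤ k) :
    (∀ i, x ≤ i → i ≤ h → f i = k + (i - x)) ∧
      Done n f (fun z => D z ∨ (x ≤ z ∧ z ≤ h)) (k + (h - x) + 1) := by
  induction h, hxh using Nat.le_induction with
  | base =>
    have h1 := Done.ge hf hD hn (hDx x le_rfl le_rfl)
    refine ⟨fun i h1 h2 => ?_, fun m hm => ?_⟩
    · obtain rfl : i = x := by omega
      omega
    · by_cases h2 : m < k
      · obtain ⟨z, hz, hDz, he⟩ := hD m h2
        exact ⟨z, hz, Or.inl hDz, he⟩
      · exact ⟨x, hn, Or.inr ⟨le_rfl, le_rfl⟩, by omega⟩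
  | succ h hxh ih =>
    obtain ⟨e, d⟩ := ih (by omega) (fun i h1 h2 => hDx i h1 (by omega))
      (fun i h1 h2 => hR i h1 (by omega))
    have h1 := Done.ge hf d (y := h+1) hn (by
      rintro (h1 | h1)
      · exact hDx (h+1) (by omega) le_rfl h1
      · omega)
    have h2 := hf.step _ _ (hR h hxh (by omega))
    have h3 := e h hxh le_rfl
    refine ⟨fun i h4 h5 => ?_, fun m hm => ?_⟩
    · rcases Nat.lt_or_ge h i with h6 | h6
      · obtain rfl : i = h + 1 := by omega
        omega
      · exact e i h4 h6
    · by_cases h2 : m < k + (h - x) + 1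
      · obtain ⟨z, hz, hDz, he⟩ := d m h2
        refine ⟨z, hz, ?_, he⟩
        rcases hDz with h7 | h7
        · exact Or.inl h7
        · exact Or.inr (by omega)
      · exact ⟨h+1, hn, Or.inr (by omega), by omega⟩

end RankN

/-- strongness from a root -/
lemma strong_of_root {n : ℕ} {R : ℕ → ℕ → Prop} (r : ℕ)
    (h1 : ∀ x < n, Relation.ReflTransGen R x r) (h2 : ∀ x < n, Relation.ReflTransGen R r x) :
    ∀ x y, x < n → y < n → Relation.ReflTransGen R x y :=
  fun x y hx hy => (h1 x hx).trans (h2 y hy)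

/-- case of a cover by two chords -/
lemma caseQ {n : ℕ} {A : ℕ → ℕ → Prop} (hA : PathG n A) (hyp : HypN n A) {a b u v p q : ℕ}
    (ha : 1 ≤ a) (hab : a ≤ b) (hb : b + 2 ≤ n) (hb2 : 2 ≤ b) (ha2 : a + 3 ≤ n)
    (A1 : A 0 b) (A2 : A a (n-1))
    (huv : u + 2 ≤ v) (hv : v < n) (A3 : A u v) (hpq : p + 2 ≤ q) (hq : q < n) (A4 : A p q)
    (e1 : ¬ (u = 0 ∧ v = b)) (e2 : ¬ (u = a ∧ v = n-1)) (e3 : ¬ (p = 0 ∧ q = b))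
    (e4 : ¬ (p = a ∧ q = n-1)) (e5 : ¬ (u = p ∧ v = q)) :
    ((p < a ∧ q < a) ∨ (a ≤ p ∧ p ≤ b ∧ a ≤ q ∧ q ≤ b) ∨ (b < p ∧ b < q)) ∧
    ¬ ((u < a ∧ v < a) ∨ (a ≤ u ∧ u ≤ b ∧ a ≤ v ∧ v ≤ b) ∨ (b < u ∧ b < v)) := by
  obtain ⟨f, hf⟩ := hyp (fun x y => A x y ∧ (y = x + 1 ∨ (x = b ∧ y = 0) ∨ (x = n-1 ∧ y = a) ∨
      (x = u ∧ y = v) ∨ (x = q ∧ y = p))) (fun x y h => h.1)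
      (by rintro x y ⟨-, h⟩ ⟨-, h'⟩; omega)
      (by
        have up := ascend_path (R := (fun x y => A x y ∧ (y = x + 1 ∨ (x = b ∧ y = 0) ∨ (x = n-1 ∧ y = a) ∨
          (x = u ∧ y = v) ∨ (x = q ∧ y = p)))) (l := 0) (h := n-1)
          (fun i _ h => ⟨hA.path i (by omega), Or.inl rfl⟩)
        refine strong_of_root 0 (fun x hx => ?_) (fun x hx => up 0 x (by omega) (by omega) (by omega))
        exact (((up x (n-1) (by omega) (by omega) (by omega)).tail
          ⟨hA.symm _ _ A2, by omega⟩).trans (up a b (by omega) (by omega) (by omega))).tail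
          ⟨hA.symm _ _ A1, by omega⟩)
  have Rup : ∀ i, i + 1 < n → (A i (i+1) ∧ (i+1 = i + 1 ∨ (i = b ∧ i+1 = 0) ∨ (i = n-1 ∧ i+1 = a) ∨
      (i = u ∧ i+1 = v) ∨ (i = q ∧ i+1 = p))) := fun i h => ⟨hA.path i h, Or.inl rfl⟩
  have Rb := hf.step b 0 ⟨hA.symm _ _ A1, by omega⟩
  have Rn := hf.step (n-1) a ⟨hA.symm _ _ A2, by omega⟩
  have Ru := hf.step u v ⟨A3, by omega⟩
  have Rq := hf.step q p ⟨hA.symm _ _ A4, by omega⟩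
  obtain ⟨s, hs, hus, h0⟩ := hf.branch (fun x => u < x) u (u+1) v (by omega) (by omega)
    (by omega) (by omega) (by omega) (Rup u (by omega)) ⟨A3, by omega⟩
    (by rintro x y ⟨-, h⟩ h1 h2; omega)
  have D0 : RankN.Done n f (fun _ => False) 0 := fun m hm => by omega
  have hbs : b < s := by
    by_contra hbs
    obtain ⟨e, d⟩ := hf.chain D0 s (b+1) (by omega) (by omega) (by simp)
      (fun i _ _ => Rup i (by omega)) (by omega)
    have := RankN.Done.ge hf d (y := 0) (by omega) (by simp only [false_or]; omega)
    have := e b (by omega) (by omega)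
    omega
  obtain ⟨e, d⟩ := hf.chain D0 s (n-1) (by omega) (by omega) (by simp)
      (fun i _ _ => Rup i (by omega)) (by omega)
  have en := e (n-1) (by omega) le_rfl
  have hsb : s = b + 1 := by
    by_contra hsb
    obtain ⟨e', d'⟩ := hf.chain d a (b+1) (by omega) (by omega)
      (by intro i _ _; simp only [false_or]; omega)
      (fun i _ _ => Rup i (by omega)) (by omega)
    have := RankN.Done.ge hf d' (y := 0) (by omega) (by simp only [false_or]; omega)
    have := e' b (by omega) (by omega)
    omega
  obtain ⟨e', d'⟩ := hf.chain d a b (by omega) (by omega)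
      (by intro i _ _; simp only [false_or]; omega)
      (fun i _ _ => Rup i (by omega)) (by omega)
  have eb := e' b (by omega) le_rfl
  obtain ⟨e'', d''⟩ := hf.chain d' 0 (a-1) (by omega) (by omega)
      (by intro i _ _; simp only [false_or]; omega)
      (fun i _ _ => Rup i (by omega)) (by omega)
  have key : ∀ i < n, (i < a ∧ f i = n - a + i) ∨ (a ≤ i ∧ i ≤ b ∧ f i = n - s + i - a) ∨
      (b < i ∧ f i = i - s) := by
    intro i hi
    rcases Nat.lt_or_ge i a with h | h
    · have := e'' i (by omega) (by omega); omega
    rcases Nat.lt_or_ge b i with h' | h'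
    · have := e i (by omega) (by omega); omega
    · have := e' i (by omega) (by omega); omega
  have k1 := key u (by omega)
  have k2 := key v (by omega)
  have k3 := key p (by omega)
  have k4 := key q (by omega)
  constructor
  · omega
  · omega

/-- three cycles in a row plus one more chord -/
lemma caseQ4 {n : ℕ} {A : ℕ → ℕ → Prop} (hA : PathG n A) (hyp : HypN n A) {a b u v : ℕ}
    (ha : 2 ≤ a) (hab : a + 2 ≤ b) (hb : b + 3 ≤ n)
    (A1 : A 0 a) (A2 : A a b) (A5 : A b (n-1))
    (huv : u + 2 ≤ v) (hv : v < n) (A3 : A u v)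
    (e1 : ¬ (u = 0 ∧ v = a)) (e2 : ¬ (u = a ∧ v = b)) (e3 : ¬ (u = b ∧ v = n-1)) : False := by
  obtain ⟨f, hf⟩ := hyp (fun x y => A x y ∧ (y = x + 1 ∨ (x = a ∧ y = 0) ∨ (x = b ∧ y = a) ∨
      (x = n-1 ∧ y = b) ∨ (x = u ∧ y = v))) (fun x y h => h.1)
      (by rintro x y ⟨-, h⟩ ⟨-, h'⟩; omega)
      (by
        have up := ascend_path (R := (fun x y => A x y ∧ (y = x + 1 ∨ (x = a ∧ y = 0) ∨ (x = b ∧ y = a) ∨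
          (x = n-1 ∧ y = b) ∨ (x = u ∧ y = v)))) (l := 0) (h := n-1)
          (fun i _ h => ⟨hA.path i (by omega), Or.inl rfl⟩)
        refine strong_of_root 0 (fun x hx => ?_) (fun x hx => up 0 x (by omega) (by omega) (by omega))
        exact (((up x (n-1) (by omega) (by omega) (by omega)).tail
          ⟨hA.symm _ _ A5, by omega⟩).tail ⟨hA.symm _ _ A2, by omega⟩).tail
          ⟨hA.symm _ _ A1, by omega⟩)
  have Rup : ∀ i, i + 1 < n → (A i (i+1) ∧ (i+1 = i + 1 ∨ (i = a ∧ i+1 = 0) ∨ (i = b ∧ i+1 = a) ∨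
      (i = n-1 ∧ i+1 = b) ∨ (i = u ∧ i+1 = v))) := fun i h => ⟨hA.path i h, Or.inl rfl⟩
  have Ra := hf.step a 0 ⟨hA.symm _ _ A1, by omega⟩
  have Rb := hf.step b a ⟨hA.symm _ _ A2, by omega⟩
  have Rn := hf.step (n-1) b ⟨hA.symm _ _ A5, by omega⟩
  obtain ⟨s, hs, hus, h0⟩ := hf.branch (fun x => u < x) u (u+1) v (by omega) (by omega)
    (by omega) (by omega) (by omega) (Rup u (by omega)) ⟨A3, by omega⟩
    (by rintro x y ⟨-, h⟩ h1 h2; omega)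
  have D0 : RankN.Done n f (fun _ => False) 0 := fun m hm => by omega
  have has : a < s := by
    by_contra hbs
    obtain ⟨e, d⟩ := hf.chain D0 s (a+1) (by omega) (by omega) (by simp)
      (fun i _ _ => Rup i (by omega)) (by omega)
    have := RankN.Done.ge hf d (y := 0) (by omega) (by simp only [false_or]; omega)
    have := e a (by omega) (by omega)
    omega
  have hbs : b < s := by
    by_contra hbs
    obtain ⟨e, d⟩ := hf.chain D0 s (b+1) (by omega) (by omega) (by simp)
      (fun i _ _ => Rup i (by omega)) (by omega)
    have := RankN.Done.ge hf d (y := a) (by omega) (by simp only [false_or]; omega)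
    have := e b (by omega) (by omega)
    omega
  obtain ⟨e, d⟩ := hf.chain D0 s (n-1) (by omega) (by omega) (by simp)
      (fun i _ _ => Rup i (by omega)) (by omega)
  have en := e (n-1) (by omega) le_rfl
  obtain ⟨e', d'⟩ := hf.chain d b b (by omega) (by omega)
      (by intro i _ _; simp only [false_or]; omega)
      (fun i _ _ => Rup i (by omega)) (by omega)
  have eb := e' b (by omega) le_rfl
  have ea := RankN.Done.ge hf d' (y := a) (by omega) (by simp only [false_or]; omega)
  obtain ⟨e'', d''⟩ := hf.chain d' a (a+1) (by omega) (by omega)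
      (by intro i _ _; simp only [false_or]; omega)
      (fun i _ _ => Rup i (by omega)) (by omega)
  have := e'' a (by omega) (by omega)
  have := RankN.Done.ge hf d'' (y := 0) (by omega) (by simp only [false_or]; omega)
  omega

/-- flipping at a fat overlap `[a3,b2]` -/
lemma caseM {n : ℕ} {A : ℕ → ℕ → Prop} (hA : PathG n A) (hyp : HypN n A) {a1 b1 a2 b2 a3 b3 : ℕ}
    (h0 : a1 = 0 ∨ (2 ≤ a1 ∧ A 0 a1)) (h1 : a1 < a2) (h2 : a2 ≤ b1) (h3 : b1 < a3) (h4 : a3 < b2)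
    (h5 : b2 < b3) (h6 : b3 < n) (l1 : a1 + 2 ≤ b1)
    (A1 : A a1 b1) (A2 : A a2 b2) (A3 : A a3 b3)
    (cov : ∀ i, b3 ≤ i → i + 1 < n → ∃ a b, A a b ∧ b2 < a ∧ a ≤ i ∧ i < b ∧ a + 2 ≤ b) : False := by
  let R : ℕ → ℕ → Prop := fun x y => A x y ∧ ((x < b2 ∧ y = x + 1) ∨ (x = b1 ∧ y = a1) ∨
    (x = a1 ∧ y = 0 ∧ 2 ≤ a1) ∨ (x = b2 ∧ y = a2) ∨ (x = a3 ∧ y = b3) ∨ (b2 ≤ y ∧ x = y + 1) ∨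
    (b2 < x ∧ x + 2 ≤ y))
  have up : ∀ x y, 0 ≤ x → x ≤ y → y ≤ b2 → Relation.ReflTransGen R x y :=
    ascend_path (fun i _ h => ⟨hA.path i (by omega), by omega⟩)
  have dn : ∀ x y, b2 ≤ x → x ≤ y → y ≤ n-1 → Relation.ReflTransGen R y x :=
    descend_path (fun i _ h => ⟨hA.symm _ _ (hA.path i (by omega)), by omega⟩)
  have R1 : R b1 a1 := ⟨hA.symm _ _ A1, by omega⟩
  have R2 : R b2 a2 := ⟨hA.symm _ _ A2, by omega⟩
  have R3 : R a3 b3 := ⟨A3, by omega⟩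
  have to0 : Relation.ReflTransGen R b2 0 := by
    have : Relation.ReflTransGen R a1 0 := by
      rcases h0 with h | ⟨h, hh⟩
      · rw [h]
      · exact .single ⟨hA.symm _ _ hh, by omega⟩
    exact (((Relation.ReflTransGen.single R2).trans (up a2 b1 (by omega) h2 (by omega))).tail R1).trans this
  obtain ⟨f, hf⟩ := hyp R (fun x y h => h.1) (by rintro x y ⟨-, h⟩ ⟨-, h'⟩; omega) (by
    refine strong_of_root 0 (fun x hx => ?_) (fun x hx => ?_)
    · rcases Nat.lt_or_ge b2 x with h | h
      · exact (dn b2 x le_rfl (by omega) (by omega)).trans to0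
      · exact (up x b2 (by omega) h le_rfl).trans to0
    · induction x using Nat.strong_induction_on with
      | _ x ih =>
        rcases Nat.lt_or_ge b2 x with h | h
        · rcases Nat.lt_or_ge b3 x with h' | h'
          · obtain ⟨a, b, hab, k1, k2, k3, k4⟩ := cov (x-1) (by omega) (by omega)
            have := (hA.lt _ _ hab).2
            exact ((ih a (by omega) (by omega)).tail ⟨hab, by omega⟩).trans
              (dn x b (by omega) (by omega) (by omega))
          · exact ((ih a3 (by omega) (by omega)).tail R3).trans
              (dn x b3 (by omega) (by omega) (by omega))
        · exact up 0 x (by omega) (by omega) h)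
  obtain ⟨s, hs, hsP, hs0⟩ := hf.twoset (fun x => x ≤ a1) (fun x => x = b1 + 1) b1 a1 (b1+1)
    (by omega) (by omega) le_rfl rfl (by intro x; omega)
    (by rintro x y ⟨-, h⟩ h1 h2; omega) (by rintro x y ⟨-, h⟩ h1 h2; omega)
  obtain ⟨t, ht, htP, ht0⟩ := hf.branch (fun x => a3 < x) a3 (a3+1) b3
    (by omega) (by omega) (by omega) (by omega) (by omega) ⟨hA.path _ (by omega), by omega⟩ R3
    (by rintro x y ⟨-, h⟩ h1 h2; omega)
  have := hf.uniq hs ht hs0 ht0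
  omega

/-- flipping at a fat overlap `[a2,b1]` -/
lemma caseMr {n : ℕ} {A : ℕ → ℕ → Prop} (hA : PathG n A) (hyp : HypN n A) {b1 a2 b2 a3 b3 : ℕ}
    (h1 : 0 < a2) (h2 : a2 < b1) (h3 : b1 < a3) (h4 : a3 ≤ b2)
    (h5 : b2 < b3) (h6 : b3 < n) (l1 : a3 + 2 ≤ b3)
    (A1 : A 0 b1) (A2 : A a2 b2) (A3 : A a3 b3)
    (cov : ∀ i, b3 ≤ i → i + 1 < n → ∃ a b, A a b ∧ b2 < a ∧ a ≤ i ∧ i < b ∧ a + 2 ≤ b) : False := by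
  let R : ℕ → ℕ → Prop := fun x y => A x y ∧ ((x < a2 ∧ y = x + 1) ∨ (x = b1 ∧ y = 0) ∨
    (x = a2 ∧ y = b2) ∨ (x = a3 ∧ y = b3) ∨ (a2 ≤ y ∧ x = y + 1) ∨
    (b2 < x ∧ x + 2 ≤ y))
  have up : ∀ x y, 0 ≤ x → x ≤ y → y ≤ a2 → Relation.ReflTransGen R x y :=
    ascend_path (fun i _ h => ⟨hA.path i (by omega), by omega⟩)
  have dn : ∀ x y, a2 ≤ x → x ≤ y → y ≤ n-1 → Relation.ReflTransGen R y x :=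
    descend_path (fun i _ h => ⟨hA.symm _ _ (hA.path i (by omega)), by omega⟩)
  have R1 : R b1 0 := ⟨hA.symm _ _ A1, by omega⟩
  have R2 : R a2 b2 := ⟨A2, by omega⟩
  have R3 : R a3 b3 := ⟨A3, by omega⟩
  have fro : ∀ x, a2 ≤ x → x < n → Relation.ReflTransGen R a2 x := by
    intro x hx hxn
    induction x using Nat.strong_induction_on with
      | _ x ih =>
        rcases Nat.lt_or_ge b2 x with h | h
        · rcases Nat.lt_or_ge b3 x with h' | h'
          · obtain ⟨a, b, hab, k1, k2, k3, k4⟩ := cov (x-1) (by omega) (by omega)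
            have := (hA.lt _ _ hab).2
            exact ((ih a (by omega) (by omega) (by omega)).tail ⟨hab, by omega⟩).trans
              (dn x b (by omega) (by omega) (by omega))
          · exact ((ih a3 (by omega) (by omega) (by omega)).tail R3).trans
              (dn x b3 (by omega) (by omega) (by omega))
        · exact (Relation.ReflTransGen.single R2).trans (dn x b2 hx h (by omega))
  obtain ⟨f, hf⟩ := hyp R (fun x y h => h.1) (by rintro x y ⟨-, h⟩ ⟨-, h'⟩; omega) (by
    refine strong_of_root a2 (fun x hx => ?_) (fun x hx => ?_)
    · rcases Nat.lt_or_ge a2 x with h | h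
      · exact dn a2 x le_rfl (by omega) (by omega)
      · exact up x a2 (by omega) h le_rfl
    · rcases Nat.lt_or_ge x a2 with h | h
      · exact ((fro b1 (by omega) (by omega)).tail R1).trans (up 0 x (by omega) (by omega) (by omega))
      · exact fro x h hx)
  obtain ⟨s, hs, hsP, hs0⟩ := hf.twoset (fun x => b2 < x) (fun x => x + 1 = a3) a3 b3 (a3-1)
    (by omega) (by omega) h5 (by omega) (by intro x; omega)
    (by rintro x y ⟨-, h⟩ h1 h2; omega) (by rintro x y ⟨-, h⟩ h1 h2; omega)
  obtain ⟨t, ht, htP, ht0⟩ := hf.branch (fun x => x < b1) b1 0 (b1-1)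
    (by omega) (by omega) (by omega) (by omega) (by omega) R1
    ⟨by have := hA.symm _ _ (hA.path (b1-1) (by omega)); rwa [Nat.sub_add_cancel (by omega)] at this,
      by omega⟩
    (by rintro x y ⟨-, h⟩ h1 h2; omega)
  have := hf.uniq hs ht hs0 ht0
  omega

/-- flipping at a cut vertex -/
lemma caseM4 {n : ℕ} {A : ℕ → ℕ → Prop} (hA : PathG n A) (hyp : HypN n A) {w1 w2 w3 : ℕ}
    (h1 : 2 ≤ w1) (h2 : w1 + 2 ≤ w2) (h3 : w2 + 2 ≤ w3) (h4 : w3 + 1 < n)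
    (A1 : A 0 w1) (A2 : A w1 w2) (A3 : A w2 w3)
    (cov : ∀ i, w3 ≤ i → i + 1 < n → ∃ a b, A a b ∧ w3 ≤ a ∧ a ≤ i ∧ i < b ∧ a + 2 ≤ b) : False := by
  let R : ℕ → ℕ → Prop := fun x y => A x y ∧ ((x < w2 ∧ y = x + 1) ∨ (x = w1 ∧ y = 0) ∨
    (x = w2 ∧ y = w1) ∨ (x = w2 ∧ y = w3) ∨ (w2 ≤ y ∧ x = y + 1) ∨
    (w3 ≤ x ∧ x + 2 ≤ y))
  have up : ∀ x y, 0 ≤ x → x ≤ y → y ≤ w2 → Relation.ReflTransGen R x y :=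
    ascend_path (fun i _ h => ⟨hA.path i (by omega), by omega⟩)
  have dn : ∀ x y, w2 ≤ x → x ≤ y → y ≤ n-1 → Relation.ReflTransGen R y x :=
    descend_path (fun i _ h => ⟨hA.symm _ _ (hA.path i (by omega)), by omega⟩)
  have R1 : R w1 0 := ⟨hA.symm _ _ A1, by omega⟩
  have R2 : R w2 w1 := ⟨hA.symm _ _ A2, by omega⟩
  have R3 : R w2 w3 := ⟨A3, by omega⟩
  have to0 : Relation.ReflTransGen R w2 0 := (Relation.ReflTransGen.single R2).tail R1
  obtain ⟨f, hf⟩ := hyp R (fun x y h => h.1) (by rintro x y ⟨-, h⟩ ⟨-, h'⟩; omega) (by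
    refine strong_of_root 0 (fun x hx => ?_) (fun x hx => ?_)
    · rcases Nat.lt_or_ge w2 x with h | h
      · exact (dn w2 x le_rfl (by omega) (by omega)).trans to0
      · exact (up x w2 (by omega) h le_rfl).trans to0
    · induction x using Nat.strong_induction_on with
      | _ x ih =>
        rcases Nat.lt_or_ge w2 x with h | h
        · rcases Nat.lt_or_ge w3 x with h' | h'
          · obtain ⟨a, b, hab, k1, k2, k3, k4⟩ := cov (x-1) (by omega) (by omega)
            have := (hA.lt _ _ hab).2
            exact ((ih a (by omega) (by omega)).tail ⟨hab, by omega⟩).trans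
              (dn x b (by omega) (by omega) (by omega))
          · exact ((ih w2 (by omega) (by omega)).tail R3).trans
              (dn x w3 (by omega) (by omega) (by omega))
        · exact up 0 x (by omega) (by omega) h)
  obtain ⟨s, hs, hsP, hs0⟩ := hf.twoset (fun x => x = 0) (fun x => x = w1 + 1) w1 0 (w1+1)
    (by omega) (by omega) rfl rfl (by intro x; omega)
    (by rintro x y ⟨-, h⟩ h1 h2; omega) (by rintro x y ⟨-, h⟩ h1 h2; omega)
  rcases hsP with hsP | hsP
  · obtain ⟨t, ht, htP, ht0⟩ := hf.twoset (fun x => w2 < x ∧ x < w3) (fun x => w3 < x) w3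
      (w2+1) (w3+1) (by omega) (by omega) (by omega) (by omega) (by intro x; omega)
      (by rintro x y ⟨-, h⟩ h1 h2; omega) (by rintro x y ⟨-, h⟩ h1 h2; omega)
    have := hf.uniq hs ht hs0 ht0
    omega
  · have D0 : RankN.Done n f (fun _ => False) 0 := fun m hm => by omega
    obtain ⟨e, d⟩ := hf.chain D0 s w2 (by omega) (by omega) (by simp)
      (fun i _ _ => ⟨hA.path i (by omega), by omega⟩) (by omega)
    have e2 := e w2 (by omega) le_rfl
    have g1 := RankN.Done.ge hf d (y := w1) (by omega) (by simp only [false_or]; omega)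
    have g3 := RankN.Done.ge hf d (y := w3) (by omega) (by simp only [false_or]; omega)
    have s1 := hf.step _ _ R2
    have s3 := hf.step _ _ R3
    have := hf.inj w1 w3 (by omega) (by omega) (by omega)
    omega

/-- greedy choice of a chord -/
lemma greedy {n : ℕ} {A : ℕ → ℕ → Prop} (hA : PathG n A)
    (cov : ∀ i, i + 1 < n → ∃ a b, A a b ∧ a ≤ i ∧ i < b ∧ a + 2 ≤ b) (i : ℕ) (hi : i + 1 < n) :
    ∃ a b, A a b ∧ a ≤ i ∧ i < b ∧ a + 2 ≤ b ∧ b < n ∧ ∀ a' b', A a' b' → a' ≤ i → b' ≤ b := by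
  classical
  let p : ℕ → Prop := fun b => i < b ∧ ∃ a, A a b ∧ a ≤ i ∧ a + 2 ≤ b
  obtain ⟨a0, b0, k1, k2, k3, k4⟩ := cov i hi
  have hb0 : p b0 := ⟨k3, a0, k1, k2, k4⟩
  have hb0n := (hA.lt _ _ k1).2
  have hsp : p (Nat.findGreatest p n) := Nat.findGreatest_spec hb0n.le hb0
  obtain ⟨hib, a, hab, hai, hl⟩ := hsp
  refine ⟨a, _, hab, hai, hib, hl, (hA.lt _ _ hab).2, fun a' b' h1 h2 => ?_⟩
  by_contra hlt
  refine hlt (Nat.le_findGreatest (hA.lt _ _ h1).2.le ⟨by omega, a', h1, h2, by omega⟩)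

lemma mainN {n : ℕ} {A : ℕ → ℕ → Prop} (hn : 5 ≤ n) (hA : PathG n A) (hyp : HypN n A)
    (cov : ∀ i, i + 1 < n → ∃ a b, A a b ∧ a ≤ i ∧ i < b ∧ a + 2 ≤ b)
    (hham : ¬ A 0 (n-1)) (C : Finset (ℕ × ℕ)) (hC : ∀ c ∈ C, A c.1 c.2 ∧ c.1 + 2 ≤ c.2)
    (hcard : 4 ≤ C.card) : False := by
  obtain ⟨a1, b1, A1, h1, -, l1, n1, m1⟩ := greedy hA cov 0 (by omega)
  obtain rfl : a1 = 0 := by omega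
  have hb1 : b1 ≠ n - 1 := fun h => hham (h ▸ A1)
  obtain ⟨a2, b2, A2, h2, h2', l2, n2, m2⟩ := greedy hA cov b1 (by omega)
  have ha2 : 0 < a2 := by
    by_contra h
    obtain rfl : a2 = 0 := by omega
    have := m1 _ _ A2 le_rfl
    omega
  by_cases hb2 : b2 = n - 1
  · subst hb2
    have ex : ∀ D : Finset (ℕ × ℕ), D.card < 4 → ∃ u v, A u v ∧ u + 2 ≤ v ∧ v < n ∧ (u, v) ∉ D := by
      intro D hD
      obtain ⟨⟨u, v⟩, hc, hd⟩ := Finset.exists_mem_notMem_of_card_lt_card (lt_of_lt_of_le hD hcard)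
      exact ⟨u, v, (hC _ hc).1, (hC _ hc).2, (hA.lt _ _ (hC _ hc).1).2, hd⟩
    obtain ⟨u, v, k1, k2, k3, k4⟩ := ex {(0, b1), (a2, n-1)} (by
      refine lt_of_le_of_lt (Finset.card_le_two) (by omega))
    obtain ⟨p, q, j1, j2, j3, j4⟩ := ex {(0, b1), (a2, n-1), (u, v)} (by
      refine lt_of_le_of_lt (Finset.card_le_three) (by omega))
    simp only [Finset.mem_insert, Finset.mem_singleton, Prod.mk.injEq, not_or] at k4 j4
    have r1 := caseQ hA hyp (a := a2) (b := b1) ha2 h2 (by omega) (by omega) (by omega) A1 A2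
      k2 k3 k1 j2 j3 j1 (by omega) (by omega) (by omega) (by omega) (by omega)
    have r2 := caseQ hA hyp (a := a2) (b := b1) ha2 h2 (by omega) (by omega) (by omega) A1 A2
      j2 j3 j1 k2 k3 k1 (by omega) (by omega) (by omega) (by omega) (by omega)
    exact r2.2 r1.1
  obtain ⟨a3, b3, A3, h3, h3', l3, n3, m3⟩ := greedy hA cov b2 (by omega)
  have ha3 : b1 < a3 := by
    by_contra h
    have := m2 _ _ A3 (by omega)
    omega
  have cov3 : ∀ i, b3 ≤ i → i + 1 < n → ∃ a b, A a b ∧ b2 < a ∧ a ≤ i ∧ i < b ∧ a + 2 ≤ b := by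
    intro i hi hin
    obtain ⟨a, b, k1, k2, k3, k4⟩ := cov i hin
    refine ⟨a, b, k1, ?_, k2, k3, k4⟩
    by_contra h
    have := m3 _ _ k1 (by omega)
    omega
  rcases Nat.lt_or_ge a3 b2 with hf | hf
  · exact caseM hA hyp (a1 := 0) (Or.inl rfl) ha2 h2 ha3 hf h3' n3 l1 A1 A2 A3 cov3
  rcases Nat.lt_or_ge a2 b1 with hf' | hf'
  · exact caseMr hA hyp ha2 hf' ha3 h3 h3' n3 l3 A1 A2 A3 cov3
  obtain rfl : a2 = b1 := by omega
  obtain rfl : a3 = b2 := by omega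
  by_cases hb3 : b3 = n - 1
  · subst hb3
    obtain ⟨⟨u, v⟩, hc, hd⟩ := Finset.exists_mem_notMem_of_card_lt_card
      (s := {(0, a2), (a2, a3), (a3, n-1)}) (lt_of_lt_of_le
        (lt_of_le_of_lt (Finset.card_le_three) (by omega)) hcard)
    simp only [Finset.mem_insert, Finset.mem_singleton, Prod.mk.injEq, not_or] at hd
    have := hC _ hc
    exact caseQ4 hA hyp (a := a2) (b := a3) (u := u) (v := v) (by omega) l2 (by omega) A1 A2 A3
      this.2 (hA.lt _ _ this.1).2 this.1 (by omega) (by omega) (by omega)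
  obtain ⟨a4, b4, A4, h4, h4', l4, n4, m4⟩ := greedy hA cov b3 (by omega)
  have ha4 : a3 < a4 := by
    by_contra h
    have := m3 _ _ A4 (by omega)
    omega
  have cov4 : ∀ i, b4 ≤ i → i + 1 < n → ∃ a b, A a b ∧ b3 < a ∧ a ≤ i ∧ i < b ∧ a + 2 ≤ b := by
    intro i hi hin
    obtain ⟨a, b, k1, k2, k3, k4⟩ := cov i hin
    refine ⟨a, b, k1, ?_, k2, k3, k4⟩
    by_contra h
    have := m4 _ _ k1 (by omega)
    omega
  rcases Nat.lt_or_ge a4 b3 with hf | hf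
  · exact caseM hA hyp (a1 := a2) (b1 := a3) (a2 := a3) (b2 := b3) (Or.inr ⟨by omega, A1⟩) (by omega)
      le_rfl ha4 hf h4' n4 l2 A2 A3 A4 cov4
  · obtain rfl : a4 = b3 := by omega
    refine caseM4 hA hyp (w1 := a2) (w2 := a3) (w3 := a4) (by omega) l2 l3 (by omega) A1 A2 A3 ?_
    intro i hi hin
    rcases Nat.lt_or_ge i b4 with h | h
    · exact ⟨a4, b4, A4, le_rfl, hi, h, l4⟩
    · obtain ⟨a, b, k1, k2, k3⟩ := cov4 i h hin
      exact ⟨a, b, k1, k2.le, k3⟩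

/-- Robbins: a bridgeless graph has a strong partial orientation. -/
lemma robbins {V : Type*} [Fintype V] (G : SimpleGraph V) (hbl : Bridgeless G) :
    ∃ R : V → V → Prop, (∀ u v, R u v → G.Adj u v) ∧ (∀ u v, R u v → ¬ R v u) ∧
      ∀ u v, Relation.ReflTransGen R u v := by
  classical
  obtain ⟨hconn, hbr⟩ := hbl
  let good : Finset V → Prop := fun S => ∃ R : V → V → Prop, (∀ u v, R u v → G.Adj u v) ∧
    (∀ u v, R u v → ¬ R v u) ∧ (∀ u v, R u v → u ∈ S ∧ v ∈ S) ∧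
    ∀ u ∈ S, ∀ v ∈ S, Relation.ReflTransGen R u v
  obtain ⟨r⟩ := hconn.nonempty
  have hr : good {r} := ⟨fun _ _ => False, by simp, by simp, by simp, by
    intro u hu v hv
    rw [Finset.mem_singleton] at hu hv
    subst hu hv; exact .refl⟩
  obtain ⟨S, hS, hmax⟩ := Finset.exists_max_image (Finset.univ.filter fun S => r ∈ S ∧ good S)
    Finset.card ⟨{r}, by simp [hr]⟩
  simp only [Finset.mem_filter, Finset.mem_univ, true_and] at hS hmax
  obtain ⟨hrS, R, hRA, hRas, hRS, hRst⟩ := hS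
  by_cases hall : ∀ v, v ∈ S
  · exact ⟨R, hRA, hRas, fun u v => hRst u (hall u) v (hall v)⟩
  exfalso
  push Not at hall
  obtain ⟨t, ht⟩ := hall
  -- an edge leaving `S`
  obtain ⟨u, v, huS, hvS, huv⟩ : ∃ u v, u ∈ S ∧ v ∉ S ∧ G.Adj u v := by
    obtain ⟨w⟩ := hconn.preconnected r t
    obtain ⟨d, hd, h1, h2⟩ := w.exists_boundary_dart (S : Set V) (by simpa using hrS) (by simpa using ht)
    exact ⟨d.fst, d.snd, by simpa using h1, by simpa using h2, d.adj⟩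
  have hreach := hbr s(v, u)
  rw [isBridge_iff, not_not] at hreach
  obtain ⟨w, hw⟩ := hreach.exists_isPath
  have hex : ∃ i, w.getVert i ∈ S := ⟨w.length, by simpa using huS⟩
  set m := Nat.find hex with hm
  have hmS : w.getVert m ∈ S := Nat.find_spec hex
  have hlt : ∀ i < m, w.getVert i ∉ S := fun i hi => Nat.find_min hex hi
  have hml : m ≤ w.length := Nat.find_min' hex (by simpa using huS)
  have hm0 : m ≠ 0 := fun h => by rw [h] at hmS; simp at hmS; exact hvS hmS
  have hinj : ∀ i j, i ≤ m → j ≤ m → w.getVert i = w.getVert j → i = j := fun i j hi hj h =>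
    hw.getVert_injOn (by simp; omega) (by simp; omega) h
  have hadj : ∀ i < m, (G.deleteEdges {s(v, u)}).Adj (w.getVert i) (w.getVert (i+1)) := fun i hi =>
    w.adj_getVert_succ (by omega)
  let R' : V → V → Prop := fun x y => R x y ∨ (x = u ∧ y = v) ∨
    ∃ i < m, x = w.getVert i ∧ y = w.getVert (i+1)
  have hmono : ∀ x y, Relation.ReflTransGen R x y → Relation.ReflTransGen R' x y := fun x y h =>
    by
    induction h with
    | refl => exact Relation.ReflTransGen.refl
    | tail _ hs ih => exact ih.tail (Or.inl hs)
  let S' : Finset V := S ∪ (Finset.range (m+1)).image w.getVert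
  have hSS' : S ⊆ S' := Finset.subset_union_left
  have hwS' : ∀ i ≤ m, w.getVert i ∈ S' := fun i hi =>
    Finset.mem_union_right _ (Finset.mem_image_of_mem _ (by simp; omega))
  have hvS' : v ∈ S' := by have := hwS' 0 (by omega); simpa using this
  have hup : ∀ j ≤ m, Relation.ReflTransGen R' v (w.getVert j) := by
    intro j
    induction j with
    | zero => intro _; simp; exact .refl
    | succ j ih => intro hj; exact (ih (by omega)).tail (Or.inr (Or.inr ⟨j, by omega, rfl, rfl⟩))
  have hdown : ∀ k j, j + k = m → Relation.ReflTransGen R' (w.getVert j) (w.getVert m) := by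
    intro k
    induction k with
    | zero => intro j hj; obtain rfl : j = m := by omega
              exact .refl
    | succ k ih => intro j hj; exact .head (Or.inr (Or.inr ⟨j, by omega, rfl, rfl⟩)) (ih (j+1) (by omega))
  have hto : ∀ x ∈ S', Relation.ReflTransGen R' x u := by
    intro x hx
    rcases Finset.mem_union.1 hx with h | h
    · exact hmono _ _ (hRst x h u huS)
    · obtain ⟨i, hi, rfl⟩ := Finset.mem_image.1 h
      rw [Finset.mem_range] at hi
      exact (hdown (m - i) i (by omega)).trans (hmono _ _ (hRst _ hmS u huS))
  have hfrom : ∀ x ∈ S', Relation.ReflTransGen R' u x := by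
    intro x hx
    rcases Finset.mem_union.1 hx with h | h
    · exact hmono _ _ (hRst u huS x h)
    · obtain ⟨i, hi, rfl⟩ := Finset.mem_image.1 h
      rw [Finset.mem_range] at hi
      exact .head (Or.inr (Or.inl ⟨rfl, rfl⟩)) (hup i (by omega))
  have hgood : good S' := by
    refine ⟨R', ?_, ?_, ?_, fun x hx y hy => (hto x hx).trans (hfrom y hy)⟩
    · rintro x y (h | ⟨rfl, rfl⟩ | ⟨i, hi, rfl, rfl⟩)
      · exact hRA _ _ h
      · exact huv
      · exact (SimpleGraph.deleteEdges_le _) (hadj i hi)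
    · rintro x y (h | ⟨rfl, rfl⟩ | ⟨i, hi, rfl, rfl⟩) (h' | ⟨h1, h2⟩ | ⟨j, hj, h1, h2⟩)
      · exact hRas _ _ h h'
      · subst h1 h2; exact hvS (hRS _ _ h).1
      · subst h1; exact hlt j hj (hRS _ _ h).2
      · exact hvS (hRS _ _ h').1
      · subst h1; exact hvS huS
      · have h0 : j = 0 := hinj j 0 (by omega) (by omega) (by rw [← h1]; simp)
        subst h0
        have := hadj 0 hj
        rw [← h1, ← h2] at this
        simp at this
      · exact hlt i hi (hRS _ _ h').2
      · have h0 : i = 0 := hinj i 0 (by omega) (by omega) (by rw [h2]; simp)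
        subst h0
        have := hadj 0 hi
        rw [h1, h2] at this
        simp at this
      · have e1 := hinj _ _ (by omega) (by omega) h1
        have e2 := hinj _ _ (by omega) (by omega) h2
        omega
    · rintro x y (h | ⟨rfl, rfl⟩ | ⟨i, hi, rfl, rfl⟩)
      · exact ⟨hSS' (hRS _ _ h).1, hSS' (hRS _ _ h).2⟩
      · exact ⟨hSS' huS, hvS'⟩
      · exact ⟨hwS' _ (by omega), hwS' _ (by omega)⟩
  have hle := hmax S' ⟨hSS' hrS, hgood⟩
  have : S.card < S'.card := Finset.card_lt_card ⟨hSS', fun h => hvS (h hvS')⟩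
  omega

lemma relPow_tail {V : Type*} {R : V → V → Prop} (k : ℕ) : ∀ (u x y : V), RelPow R k u x → R x y →
    RelPow R (k+1) u y := by
  induction k with
  | zero => rintro u x y rfl h; exact ⟨y, h, rfl⟩
  | succ k ih => rintro u x y ⟨w, h1, h2⟩ h; exact ⟨w, h1, ih w x y h2 h⟩

lemma relPow_last {V : Type*} {R : V → V → Prop} (k : ℕ) : ∀ (u y : V), RelPow R (k+1) u y →
    ∃ x, RelPow R k u x ∧ R x y := by
  induction k with
  | zero => rintro u y ⟨w, h1, h2⟩; exact ⟨u, rfl, by rw [← h2]; exact h1⟩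
  | succ k ih =>
    rintro u y ⟨w, h1, h2⟩
    obtain ⟨x, h3, h4⟩ := ih w y h2
    exact ⟨x, ⟨w, h1, h3⟩, h4⟩

lemma relPow_mono {V : Type*} {R R' : V → V → Prop} (h : ∀ x y, R x y → R' x y) (k : ℕ) :
    ∀ (u y : V), RelPow R k u y → RelPow R' k u y := by
  induction k with
  | zero => intro u y h; exact h
  | succ k ih => rintro u y ⟨w, h1, h2⟩; exact ⟨w, h _ _ h1, ih w y h2⟩

/-- ranking on the vertices -/
structure RankV {V : Type*} [Fintype V] (R : V → V → Prop) (f : V → ℕ) : Prop where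
  inj : Function.Injective f
  lt : ∀ x, f x < Fintype.card V
  step : ∀ x y, R x y → f y ≤ f x + 1
  pred : ∀ y, f y = 0 ∨ ∃ x, R x y ∧ f y = f x + 1

lemma rank_of_not_diam {V : Type*} [Fintype V] (R : V → V → Prop)
    (hst : ∀ u v, Relation.ReflTransGen R u v) (hn : 2 ≤ Fintype.card V)
    (hd : ¬ DiamLE R (Fintype.card V - 2)) : ∃ f, RankV R f := by
  classical
  unfold DiamLE at hd
  push Not at hd
  obtain ⟨s, t, hst'⟩ := hd
  have hex : ∀ x, ∃ k, RelPow R k s x := by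
    intro x
    induction hst s x with
    | refl => exact ⟨0, rfl⟩
    | tail _ h ih => obtain ⟨k, hk⟩ := ih; exact ⟨k+1, relPow_tail k _ _ _ hk h⟩
  let f : V → ℕ := fun x => Nat.find (hex x)
  have hfs : ∀ x, RelPow R (f x) s x := fun x => Nat.find_spec (hex x)
  have hfm : ∀ x k, RelPow R k s x → f x ≤ k := fun x k h => Nat.find_min' (hex x) h
  have hstep : ∀ x y, R x y → f y ≤ f x + 1 := fun x y h => hfm y _ (relPow_tail _ _ _ _ (hfs x) h)
  have hpred : ∀ y, f y = 0 ∨ ∃ x, R x y ∧ f y = f x + 1 := by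
    intro y
    rcases Nat.eq_zero_or_pos (f y) with h | h
    · exact Or.inl h
    · right
      obtain ⟨k, hk⟩ : ∃ k, f y = k + 1 := ⟨f y - 1, by omega⟩
      have h1 := hfs y
      rw [hk] at h1
      obtain ⟨x, h2, h3⟩ := relPow_last k s y h1
      have := hfm x k h2
      have := hstep x y h3
      exact ⟨x, h3, by omega⟩
  have hft : Fintype.card V - 1 ≤ f t := by
    by_contra h
    exact hst' (f t) (by omega) (hfs t)
  have hall : ∀ k m, m + k = f t → ∃ x, f x = m := by
    intro k
    induction k with
    | zero => intro m hm; exact ⟨t, by omega⟩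
    | succ k ih =>
      intro m hm
      obtain ⟨y, hy⟩ := ih (m+1) (by omega)
      rcases hpred y with h | ⟨x, -, h⟩
      · omega
      · exact ⟨x, by omega⟩
  have hsub : Finset.range (f t + 1) ⊆ Finset.univ.image f := by
    intro m hm
    rw [Finset.mem_range] at hm
    obtain ⟨x, hx⟩ := hall (f t - m) m (by omega)
    exact Finset.mem_image.2 ⟨x, Finset.mem_univ _, hx⟩
  have h1 := Finset.card_le_card hsub
  have h2 : (Finset.univ.image f).card ≤ Fintype.card V := Finset.card_image_le
  rw [Finset.card_range] at h1
  have heq : Finset.range (f t + 1) = Finset.univ.image f :=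
    Finset.eq_of_subset_of_card_le hsub (by rw [Finset.card_range]; omega)
  refine ⟨f, ?_, ?_, hstep, hpred⟩
  · have : (Finset.univ.image f).card = (Finset.univ : Finset V).card := by
      rw [Finset.card_univ]; omega
    exact fun x y h => Finset.card_image_iff.1 this (by simp) (by simp) h
  · intro x
    have : f x ∈ Finset.range (f t + 1) := by rw [heq]; exact Finset.mem_image_of_mem _ (Finset.mem_univ _)
    rw [Finset.mem_range] at this
    omega

/-- extending a partial orientation -/
lemma extend_orient {V : Type*} [Fintype V] (G : SimpleGraph V) (R : V → V → Prop)
    (h1 : ∀ u v, R u v → G.Adj u v) (h2 : ∀ u v, R u v → ¬ R v u) :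
    ∃ R', IsOrientation G R' ∧ ∀ u v, R u v → R' u v := by
  let e := Fintype.equivFin V
  refine ⟨fun u v => R u v ∨ (G.Adj u v ∧ ¬ R v u ∧ e u < e v), ⟨?_, ?_⟩, fun u v h => Or.inl h⟩
  · rintro u v (h | h)
    · exact h1 _ _ h
    · exact h.1
  · intro u v h
    have hne : e u ≠ e v := fun h' => h.ne (e.injective h')
    have a1 := h2 u v
    have a2 := h2 v u
    have hs := h.symm
    constructor
    · rintro (h3 | h3) (h4 | h4)
      · exact a1 h3 h4
      · exact h4.2.1 h3
      · exact h3.2.1 h4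
      · exact absurd h3.2.2 (not_lt.2 h4.2.2.le)
    · intro h3
      push Not at h3
      by_cases h5 : R u v
      · exact Or.inl h5
      · have := h3.2 hs h5
        exact Or.inr ⟨h, h3.1, lt_of_le_of_ne this hne⟩

/-- a Hamiltonian path with adjacent ends gives a Hamiltonian graph -/
lemma ham_of_path {V : Type*} [Fintype V] [DecidableEq V] (G : SimpleGraph V) (n : ℕ)
    (hn : 3 ≤ n) (hcard : Fintype.card V = n) (p : ℕ → V)
    (hp : ∀ i j, i < n → j < n → p i = p j → i = j)
    (hadj : ∀ i, i + 1 < n → G.Adj (p i) (p (i+1))) (hc : G.Adj (p 0) (p (n-1))) :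
    G.IsHamiltonian := by
  have hw : ∀ k < n, ∃ w : G.Walk (p k) (p 0), w.IsPath ∧ w.length = k ∧
      ∀ x ∈ w.support, ∃ i ≤ k, x = p i := by
    intro k
    induction k with
    | zero => intro _; exact ⟨.nil, by simp, by simp, by simp⟩
    | succ k ih =>
      intro hk
      obtain ⟨w, h1, h2, h3⟩ := ih (by omega)
      refine ⟨.cons (hadj k hk).symm w, ?_, by simp [h2], ?_⟩
      · rw [Walk.cons_isPath_iff]
        refine ⟨h1, fun h => ?_⟩
        obtain ⟨i, hi, he⟩ := h3 _ h
        have := hp _ _ hk (by omega) he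
        omega
      · intro x hx
        rw [Walk.support_cons, List.mem_cons] at hx
        rcases hx with rfl | hx
        · exact ⟨k+1, le_rfl, rfl⟩
        · obtain ⟨i, hi, he⟩ := h3 _ hx
          exact ⟨i, by omega, he⟩
  obtain ⟨w, h1, h2, -⟩ := hw (n-1) (by omega)
  intro _
  refine ⟨p 0, .cons hc w, ?_⟩
  rw [Walk.isHamiltonianCycle_iff_isCycle_and_length_eq]
  refine ⟨?_, by simp [h2, hcard]; omega⟩
  rw [Walk.cons_isCycle_iff]
  refine ⟨h1, fun h => ?_⟩
  have h5 := h1.length_eq_one_of_mem_edges (by rw [Sym2.eq_swap]; exact h)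
  omega

theorem stmt_12 {V : Type*} [Fintype V] [DecidableEq V] (G : SimpleGraph V)
    (hn : 5 ≤ Fintype.card V) (hham : ¬ G.IsHamiltonian) (hbl : Bridgeless G)
    (hsize : Fintype.card V + 3 ≤ G.edgeSet.ncard) :
    ∃ R : V → V → Prop, IsOrientation G R ∧ DiamLE R (Fintype.card V - 2) := by
  classical
  by_contra hcon
  have hrank : ∀ R : V → V → Prop, (∀ u v, R u v → G.Adj u v) → (∀ u v, R u v → ¬ R v u) →
      (∀ u v, Relation.ReflTransGen R u v) → ∃ f, RankV R f := by
    intro R h1 h2 h3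
    refine rank_of_not_diam R h3 (by omega) fun hd => ?_
    obtain ⟨R', h4, h5⟩ := extend_orient G R h1 h2
    refine hcon ⟨R', h4, fun u v => ?_⟩
    obtain ⟨k, hk, hp⟩ := hd u v
    exact ⟨k, hk, relPow_mono h5 k u v hp⟩
  obtain ⟨R0, o1, o2, o3⟩ := robbins G hbl
  obtain ⟨g, hg⟩ := hrank R0 o1 o2 o3
  generalize hN : Fintype.card V = n at *
  -- inverse of `g`
  have hsurj : ∀ i < n, ∃ x, g x = i := by
    have : Finset.univ.image g = Finset.range n := by
      refine Finset.eq_of_subset_of_card_le ?_ ?_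
      · intro i hi
        obtain ⟨x, -, rfl⟩ := Finset.mem_image.1 hi
        rw [Finset.mem_range, ← hN]; exact hg.lt x
      · rw [Finset.card_range, Finset.card_image_of_injective _ hg.inj, Finset.card_univ, hN]
    intro i hi
    have h : i ∈ Finset.univ.image g := by rw [this]; simpa using hi
    obtain ⟨x, -, h⟩ := Finset.mem_image.1 h
    exact ⟨x, h⟩
  have hV : Nonempty V := ⟨(hsurj 0 (by omega)).choose⟩
  have hp : ∃ p : ℕ → V, ∀ i < n, g (p i) = i := by
    refine ⟨fun i => if h : i < n then (hsurj i h).choose else hV.some, fun i hi => ?_⟩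
    simp only [hi, dif_pos]
    exact (hsurj i hi).choose_spec
  obtain ⟨p, hp⟩ := hp
  have hlt : ∀ x, g x < n := fun x => hN ▸ hg.lt x
  have hpg : ∀ x, p (g x) = x := fun x => hg.inj (hp _ (hlt x))
  have hpath : ∀ i, i + 1 < n → R0 (p i) (p (i+1)) := by
    intro i hi
    rcases hg.pred (p (i+1)) with h | ⟨x, h1, h2⟩
    · rw [hp _ hi] at h; omega
    · rw [hp _ hi] at h2
      have : g x = i := by omega
      rw [← this, hpg, this]; exact h1
  let A : ℕ → ℕ → Prop := fun i j => i < n ∧ j < n ∧ G.Adj (p i) (p j)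
  have hA : PathG n A := ⟨fun x y h => ⟨h.1, h.2.1⟩, fun x y h => ⟨h.2.1, h.1, h.2.2.symm⟩,
    fun x hx => ⟨by omega, hx, o1 _ _ (hpath x hx)⟩⟩
  have hyp : HypN n A := by
    intro R h1 h2 h3
    obtain ⟨f, hf⟩ := hrank (fun x y => R (g x) (g y))
      (fun u v h => by have := (h1 _ _ h).2.2; rwa [hpg, hpg] at this)
      (fun u v h => h2 _ _ h)
      (fun u v => by
        have key : ∀ y, Relation.ReflTransGen R (g u) y → y < n →
            Relation.ReflTransGen (fun x y => R (g x) (g y)) u (p y) := by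
          intro y h
          induction h with
          | refl => intro _; rw [hpg]
          | tail _ h ih =>
            intro hy
            have := (h1 _ _ h).1
            refine (ih this).tail ?_
            rw [hp _ this, hp _ hy]; exact h
        have := key (g v) (h3 _ _ (hlt u) (hlt v)) (hlt v)
        rwa [hpg] at this)
    refine ⟨fun i => f (p i), ?_, ?_, ?_, ?_⟩
    · intro x y hx hy h
      have := hf.inj h
      rw [← hp x hx, ← hp y hy, this]
    · obtain ⟨x, hx⟩ : ∃ x, f x = 0 := by
        have : ∀ k x, f x = k → ∃ x, f x = 0 := by
          intro k
          induction k with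
          | zero => intro x h; exact ⟨x, h⟩
          | succ k ih =>
            intro x h
            rcases hf.pred x with h' | ⟨y, -, h'⟩
            · omega
            · exact ih y (by omega)
        exact this _ hV.some rfl
      exact ⟨g x, hlt x, by simpa [hpg] using hx⟩
    · intro x y h
      have h' := h1 _ _ h
      exact hf.step _ _ (by rw [hp _ h'.1, hp _ h'.2.1]; exact h)
    · intro y hy
      rcases hf.pred (p y) with h | ⟨x, h, he⟩
      · exact Or.inl h
      · refine Or.inr ⟨g x, hlt x, ?_, ?_⟩
        · rwa [hp _ hy] at h
        · simpa [hpg] using he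
  have cov : ∀ i, i + 1 < n → ∃ a b, A a b ∧ a ≤ i ∧ i < b ∧ a + 2 ≤ b := by
    intro i hi
    by_contra hno
    have key : ∀ y, Relation.ReflTransGen R0 (p (i+1)) y → i < g y := by
      intro y h
      induction h with
      | refl => rw [hp _ hi]; omega
      | @tail b c _ h ih =>
        by_contra hc
        refine hno ⟨g c, g b, ⟨hlt c, hlt b, ?_⟩, by omega, ih, ?_⟩
        · rw [hpg, hpg]; exact (o1 _ _ h).symm
        · by_contra hbc
          have e : g b = g c + 1 := by omega
          have := hpath (g c) (by have := hlt b; omega)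
          rw [← e, hpg, hpg] at this
          exact o2 _ _ h this
    have := key (p i) (o3 _ _)
    rw [hp _ (by omega)] at this
    omega
  have hham' : ¬ A 0 (n-1) := fun h => hham (ham_of_path G n (by omega) hN p
    (fun i j hi hj h => by rw [← hp i hi, ← hp j hj, h]) (fun i hi => o1 _ _ (hpath i hi)) h.2.2)
  let C : Finset (ℕ × ℕ) := (Finset.range n ×ˢ Finset.range n).filter
    fun c => A c.1 c.2 ∧ c.1 + 2 ≤ c.2
  refine mainN hn hA hyp cov hham' C (fun c hc => (Finset.mem_filter.1 hc).2) ?_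
  have hsub : G.edgeSet ⊆ (((Finset.range (n-1)).image fun i => s(p i, p (i+1))) ∪
      C.image fun c => s(p c.1, p c.2) : Finset (Sym2 V)) := by
    have key : ∀ x y, G.Adj x y → g x < g y →
        s(x, y) ∈ (((Finset.range (n-1)).image fun i => s(p i, p (i+1))) ∪
          C.image fun c => s(p c.1, p c.2) : Finset (Sym2 V)) := by
      intro x y h hxy
      rw [Finset.mem_union, Finset.mem_image, Finset.mem_image]
      have hy := hlt y
      by_cases h1 : g y = g x + 1
      · exact Or.inl ⟨g x, by rw [Finset.mem_range]; omega, by rw [← h1, hpg, hpg]⟩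
      · refine Or.inr ⟨(g x, g y), ?_, by simp [hpg]⟩
        refine Finset.mem_filter.2 ⟨by simp [hlt], ⟨hlt x, hlt y, by simpa [hpg] using h⟩, ?_⟩
        show g x + 2 ≤ g y
        omega
    intro e
    induction e with
    | _ x y =>
      intro h
      rw [SimpleGraph.mem_edgeSet] at h
      rcases lt_trichotomy (g x) (g y) with h1 | h1 | h1
      · exact key x y h h1
      · exact absurd (hg.inj h1) h.ne
      · have := key y x h.symm h1
        rw [Sym2.eq_swap] at this
        exact this
  have h1 := Set.ncard_le_ncard hsub (Finset.finite_toSet _)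
  rw [Set.ncard_coe_finset] at h1
  have h2 := Finset.card_union_le ((Finset.range (n-1)).image fun i => s(p i, p (i+1)))
      (C.image fun c => s(p c.1, p c.2))
  have h3 : ((Finset.range (n-1)).image fun i => s(p i, p (i+1))).card ≤ n - 1 := by
    simpa using Finset.card_image_le (s := Finset.range (n-1)) (f := fun i => s(p i, p (i+1)))
  have h4 : (C.image fun c => s(p c.1, p c.2)).card ≤ C.card := Finset.card_image_le
  omega
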